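/- For 1 ≤ x ≤ n let S_x ∈ Mat_{d_x×d_{x−1}}(ℂ) be the 0–1 matrix with (S_x)_{y,y} = 1 for 0 ≤ y < min(d_{x−1}, d_x) and all other entries 0. Then the GL_d-orbit of (S_1,…,S_n) is Zariski-dense in Rep_d; equivalently, vanishingIdeal(GL_d-orbit of (S_1,…,S_n)) = 0. -/

import Mathlib

open Finset Matrix

noncomputable section

/-- The representation space `Rep_d = ∏_{i=1}^n Mat_{d_i × d_{i-1}}(ℂ)`. -/
abbrev RepSp (n : ℕ) (d : ℕ → ℕ) := ∀ i : Fin n, Matrix (Fin (d (i.val+1))) (Fin (d i.val)) ℂ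

/-- The product `A_m · A_{m-1} ⋯ A_1` of the first `m` matrices (over any commutative ring);
for `m = 0` it is the identity. -/
def chainProd {S : Type} [CommRing S] (n : ℕ) (d : ℕ → ℕ)
    (A : ∀ i : Fin n, Matrix (Fin (d (i.val+1))) (Fin (d i.val)) S) :
    (m : ℕ) → m ≤ n → Matrix (Fin (d m)) (Fin (d 0)) S
  | 0, _ => 1
  | m+1, h => A ⟨m, h⟩ * chainProd n d A m (Nat.le_of_succ_le h)

/-- `Σ_d`: the set of tuples of matrices whose total product `A_n ⋯ A_1` vanishes. -/
def SigmaD (n : ℕ) (d : ℕ → ℕ) : Set (RepSp n d) := {A | chainProd n d A n le_rfl = 0}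

/-- The group `GL_d = ∏_{i=0}^n GL(d_i, ℂ)`. -/
abbrev GLd (n : ℕ) (d : ℕ → ℕ) := ∀ j : Fin (n+1), GL (Fin (d j.val)) ℂ

/-- The `GL_d`-orbit of a point of `Rep_d`, for the action
`(g_0,…,g_n) · (A_1,…,A_n) = (g_1 A_1 g_0⁻¹, …, g_n A_n g_{n-1}⁻¹)`. -/
def orbit (n : ℕ) (d : ℕ → ℕ) (A : RepSp n d) : Set (RepSp n d) :=
  {B | ∃ g : GLd n d, ∀ i : Fin n,
    B i = ((g ⟨i.val+1, Nat.succ_lt_succ i.isLt⟩ : GL (Fin (d (i.val+1))) ℂ) :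
        Matrix (Fin (d (i.val+1))) (Fin (d (i.val+1))) ℂ) * A i *
      (((g ⟨i.val, Nat.lt_succ_of_lt i.isLt⟩)⁻¹ : GL (Fin (d i.val)) ℂ) :
        Matrix (Fin (d i.val)) (Fin (d i.val)) ℂ)}

/-- The coordinate ring `R` of `Rep_d`: a polynomial ring with one variable for each
entry of each of the `n` matrices. -/
abbrev CoordRing (n : ℕ) (d : ℕ → ℕ) :=
  MvPolynomial (Σ i : Fin n, Fin (d (i.val+1)) × Fin (d i.val)) ℂ

/-- The matrices `X_i` of variables. -/
def Xmat (n : ℕ) (d : ℕ → ℕ) :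
    ∀ i : Fin n, Matrix (Fin (d (i.val+1))) (Fin (d i.val)) (CoordRing n d) :=
  fun i r c => MvPolynomial.X ⟨i, (r, c)⟩

/-- The ideal `I ⊆ R` generated by the entries of the product `X_n · X_{n-1} ⋯ X_1`. -/
def prodIdeal (n : ℕ) (d : ℕ → ℕ) : Ideal (CoordRing n d) :=
  Ideal.span {f | ∃ r c, f = chainProd n d (Xmat n d) n le_rfl r c}

/-- The coordinates of a point of `Rep_d`. -/
def coords (n : ℕ) (d : ℕ → ℕ) (A : RepSp n d) :
    (Σ i : Fin n, Fin (d (i.val+1)) × Fin (d i.val)) → ℂ :=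
  fun q => A q.1 q.2.1 q.2.2

/-- The ideal of polynomials vanishing on a subset of `Rep_d`. -/
def vanishingIdeal (n : ℕ) (d : ℕ → ℕ) (S : Set (RepSp n d)) : Ideal (CoordRing n d) where
  carrier := {f | ∀ A ∈ S, MvPolynomial.eval (coords n d A) f = 0}
  add_mem' := fun hf hg A hA => by simp [map_add, hf A hA, hg A hA]
  zero_mem' := fun A hA => by simp
  smul_mem' := fun c f hf A hA => by
    simp only [smul_eq_mul, _root_.map_mul, hf A hA, mul_zero]

/-- The (Krull) height of an ideal: the infimum of the heights (in the sense of
`Order.height` on the prime spectrum) of the primes containing it. -/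
def heightI {A : Type*} [CommRing A] (I : Ideal A) : ℕ∞ :=
  sInf {h | ∃ p : PrimeSpectrum A, I ≤ p.asIdeal ∧ Order.height p = h}

/-- The minimal height among the minimal primes of `I`, i.e. the codimension of the
maximal-dimensional irreducible components of `Σ_d`. -/
def minHt (n : ℕ) (d : ℕ → ℕ) : ℕ∞ :=
  sInf {h | ∃ P ∈ (prodIdeal n d).minimalPrimes, heightI P = h}

/-- The minimal primes of `I` whose height is the minimal one, i.e. the
maximal-dimensional irreducible components of `Σ_d`. -/
def minComponents (n : ℕ) (d : ℕ → ℕ) : Set (Ideal (CoordRing n d)) :=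
  {P ∈ (prodIdeal n d).minimalPrimes | heightI P = minHt n d}

/-- The tuple `(S_1,…,S_n)` of 0–1 matrices with `(S_x)_{y,y} = 1` for
`y < min(d_{x-1}, d_x)` and all other entries `0`. -/
def repOpen (n : ℕ) (d : ℕ → ℕ) : RepSp n d :=
  fun _ r c => if (r : ℕ) = (c : ℕ) then 1 else 0

/-! Build the orbit representative one matrix at a time. If `A_i g_{i-1} = g_i S_i` for the first
`m` matrices and the next one is generic, then `A_{m+1} g_m = P S_{m+1} b` with `P` invertible and
`b` upper unitriangular. Every upper unitriangular `b` is the last entry of an element of the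
stabilizer of `(S_1, …, S_m)`, because `b S = S b'` for some upper unitriangular `b'`; dividing `g`
by that element absorbs `b`. Being generic is a dense condition on `A_{m+1}`, so the orbit is dense
already in the classical topology, and a polynomial is determined by its values on a dense set. -/

section RectangularIdentity

variable {R : Type*} {p q k : ℕ}

/-- The `p × q` matrix with ones on the main diagonal and zeros elsewhere. -/
def rectOne (R : Type*) [Zero R] [One R] (p q : ℕ) : Matrix (Fin p) (Fin q) R :=
  of fun r c => if (r : ℕ) = c then 1 else 0

/-- The `k × k` matrix that agrees with `M` at the positions where `M` has an entry, and with the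
identity matrix at all other positions. -/
def squarePad [Zero R] [One R] (k : ℕ) (M : Matrix (Fin p) (Fin q) R) :
    Matrix (Fin k) (Fin k) R :=
  of fun r c => if h : (r : ℕ) < p ∧ (c : ℕ) < q then M ⟨r, h.1⟩ ⟨c, h.2⟩
    else (1 : Matrix (Fin k) (Fin k) R) r c

/-- Upper unitriangular matrices, of rectangular shape: ones on the main diagonal and zeros
below it. -/
def IsUnitriangular [Zero R] [One R] (M : Matrix (Fin p) (Fin q) R) : Prop :=
  ∀ (r : Fin p) (c : Fin q), (c : ℕ) ≤ r → M r c = rectOne R p q r c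

protected lemma IsUnitriangular.squarePad [Zero R] [One R] {M : Matrix (Fin p) (Fin q) R}
    (hM : IsUnitriangular M) (k : ℕ) : IsUnitriangular (squarePad k M) := by
  intro r c hcr
  by_cases h : (r : ℕ) < p ∧ (c : ℕ) < q
  · simpa [squarePad, rectOne, h] using hM ⟨r, h.1⟩ ⟨c, h.2⟩ hcr
  · simp [squarePad, h, rectOne, Matrix.one_apply, Fin.ext_iff]

lemma rectOne_mul_apply [NonAssocSemiring R] (B : Matrix (Fin q) (Fin k) R) (r : Fin p)
    (c : Fin k) : (rectOne R p q * B) r c = if h : (r : ℕ) < q then B ⟨r, h⟩ c else 0 := by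
  split_ifs with h
  · have hdiag (x : Fin q) : (r : ℕ) = x ↔ ⟨r, h⟩ = x := by rw [Fin.ext_iff]
    simp [Matrix.mul_apply, rectOne, hdiag]
  · have hdiag (x : Fin q) : (r : ℕ) ≠ x := by lia
    simp [Matrix.mul_apply, rectOne, hdiag]

lemma mul_rectOne_apply [NonAssocSemiring R] (B : Matrix (Fin k) (Fin p) R) (r : Fin k)
    (c : Fin q) : (B * rectOne R p q) r c = if h : (c : ℕ) < p then B r ⟨c, h⟩ else 0 := by
  split_ifs with h
  · have hdiag (x : Fin p) : (x : ℕ) = c ↔ x = ⟨c, h⟩ := by rw [Fin.ext_iff]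
    simp [Matrix.mul_apply, rectOne, hdiag]
  · have hdiag (x : Fin p) : (x : ℕ) ≠ c := by lia
    simp [Matrix.mul_apply, rectOne, hdiag]

lemma IsUnitriangular.mul_rectOne [NonAssocSemiring R] {b : Matrix (Fin p) (Fin p) R}
    (hb : IsUnitriangular b) (q : ℕ) : IsUnitriangular (b * rectOne R p q) := by
  intro r c hcr
  have hc : (c : ℕ) < p := hcr.trans_lt r.isLt
  rw [mul_rectOne_apply, dif_pos hc, hb _ _ hcr]
  rfl

lemma IsUnitriangular.rectOne_mul_squarePad [NonAssocSemiring R] {M : Matrix (Fin p) (Fin q) R}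
    (hM : IsUnitriangular M) : rectOne R p q * squarePad q M = M := by
  ext r c
  rw [rectOne_mul_apply]
  split_ifs with hr
  · simp [squarePad]
  · rw [hM r c (by lia)]
    simp [rectOne, show (r : ℕ) ≠ c by lia]

variable [CommRing R]

lemma IsUnitriangular.det_eq_one {b : Matrix (Fin p) (Fin p) R} (hb : IsUnitriangular b) :
    b.det = 1 := by
  have hupper : b.IsUpperTriangular := fun r c (hcr : c < r) => by
    simp [hb r c hcr.le, rectOne, Fin.val_ne_of_ne hcr.ne']
  rw [Matrix.det_of_isUpperTriangular hupper]
  exact Finset.prod_eq_one fun r _ => by simp [hb r r le_rfl, rectOne]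

lemma IsUnitriangular.isUnit {b : Matrix (Fin p) (Fin p) R} (hb : IsUnitriangular b) :
    IsUnit b :=
  (Matrix.isUnit_iff_isUnit_det b).mpr (hb.det_eq_one ▸ isUnit_one)

lemma IsUnitriangular.exists_eq_rectOne_mul {M : Matrix (Fin p) (Fin q) R}
    (hM : IsUnitriangular M) :
    ∃ b : GL (Fin q) R, IsUnitriangular b.val ∧ M = rectOne R p q * b.val := by
  obtain ⟨b, hb⟩ := (hM.squarePad q).isUnit
  exact ⟨b, hb ▸ hM.squarePad q, by rw [hb, hM.rectOne_mul_squarePad]⟩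

lemma isUnitriangular_inv_squarePad_mul {M : Matrix (Fin p) (Fin q) R}
    (hM : IsUnit (squarePad p M).det) : IsUnitriangular ((squarePad p M)⁻¹ * M) := by
  intro r c hcr
  have hc : (c : ℕ) < p := hcr.trans_lt r.isLt
  calc ((squarePad p M)⁻¹ * M) r c
      = ((squarePad p M)⁻¹ * squarePad p M) r ⟨c, hc⟩ := by simp [Matrix.mul_apply, squarePad]
    _ = rectOne R p q r c := by
      rw [Matrix.nonsing_inv_mul _ hM]
      simp [rectOne, Matrix.one_apply, Fin.ext_iff]

lemma exists_eq_mul_rectOne_mul {M : Matrix (Fin p) (Fin q) R}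
    (hM : IsUnit (squarePad p M).det) :
    ∃ (P : GL (Fin p) R) (b : GL (Fin q) R), IsUnitriangular b.val ∧
      M = P.val * rectOne R p q * b.val := by
  obtain ⟨b, hb, hMb⟩ := (isUnitriangular_inv_squarePad_mul hM).exists_eq_rectOne_mul
  obtain ⟨P, hP⟩ := (Matrix.isUnit_iff_isUnit_det _).mpr hM
  refine ⟨P, b, hb, ?_⟩
  rw [Matrix.mul_assoc, ← hMb, hP, Matrix.mul_nonsing_inv_cancel_left _ M hM]

end RectangularIdentity

section Chains

/-- Representations over `R`, of dimension vector `d`, of the quiver `0 → 1 → 2 → ⋯`. Working with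
an infinite quiver avoids dependent indexing by `Fin n` in inductions on the number of arrows. -/
abbrev ChainRep (R : Type*) (d : ℕ → ℕ) := ∀ i : ℕ, Matrix (Fin (d (i + 1))) (Fin (d i)) R

/-- The product of the general linear groups at the vertices of the quiver `0 → 1 → 2 → ⋯`. -/
abbrev ChainGL (R : Type*) [CommRing R] (d : ℕ → ℕ) := ∀ j : ℕ, GL (Fin (d j)) R

/-- The representation all of whose matrices are rectangular identities. -/
def chainOne (R : Type*) [Zero R] [One R] (d : ℕ → ℕ) : ChainRep R d :=
  fun i => rectOne R (d (i + 1)) (d i)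

variable {R : Type*} [CommRing R] {d : ℕ → ℕ} {m : ℕ} {g h : ChainGL R d} {A B C : ChainRep R d}

/-- `g` carries the first `m` matrices of `A` to those of `B`, that is,
`B_i = g_{i+1} A_i g_i⁻¹` for `i < m`, written without inverses. -/
def CarriesBelow (m : ℕ) (g : ChainGL R d) (A B : ChainRep R d) : Prop :=
  ∀ i < m, (g (i + 1)).val * A i = B i * (g i).val

namespace CarriesBelow

lemma mul (hg : CarriesBelow m g B C) (hh : CarriesBelow m h A B) :
    CarriesBelow m (g * h) A C := fun i hi => by
  simp only [Pi.mul_apply, Units.val_mul]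
  rw [Matrix.mul_assoc, hh i hi, ← Matrix.mul_assoc, hg i hi, Matrix.mul_assoc]

lemma inv (hg : CarriesBelow m g A B) : CarriesBelow m g⁻¹ B A := fun i hi => by
  simp only [Pi.inv_apply]
  calc (g (i + 1))⁻¹.val * B i
      = (g (i + 1))⁻¹.val * (B i * (g i).val) * (g i)⁻¹.val := by
        rw [Matrix.mul_assoc, Matrix.mul_assoc (B i), Units.mul_inv, Matrix.mul_one]
    _ = A i * (g i)⁻¹.val := by
        rw [← hg i hi, ← Matrix.mul_assoc, Units.inv_mul, Matrix.one_mul]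

lemma update_succ (hg : CarriesBelow m g A B) {P : GL (Fin (d (m + 1))) R}
    (hP : P.val * A m = B m * (g m).val) :
    CarriesBelow (m + 1) (Function.update g (m + 1) P) A B := by
  intro i hi
  rw [Function.update_of_ne (by lia : i ≠ m + 1)]
  rcases Nat.lt_succ_iff_lt_or_eq.mp hi with him | rfl
  · rw [Function.update_of_ne (by lia : i + 1 ≠ m + 1)]
    exact hg i him
  · rwa [Function.update_self]

lemma update_right (hg : CarriesBelow m g A B) (M : Matrix (Fin (d (m + 1))) (Fin (d m)) R) :
    CarriesBelow m g A (Function.update B m M) := fun i hi => by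
  rw [Function.update_of_ne hi.ne, hg i hi]

end CarriesBelow

lemma IsUnitriangular.exists_stabilizer_chainOne {b : GL (Fin (d m)) R}
    (hb : IsUnitriangular b.val) :
    ∃ h : ChainGL R d, h m = b ∧ CarriesBelow m h (chainOne R d) (chainOne R d) := by
  induction m with
  | zero => exact ⟨Function.update 1 0 b, Function.update_self .., fun i hi => by lia⟩
  | succ m ih =>
    obtain ⟨b', hb', hbb'⟩ := (hb.mul_rectOne (d m)).exists_eq_rectOne_mul
    obtain ⟨h, rfl, hh⟩ := ih hb'
    exact ⟨Function.update h (m + 1) b, Function.update_self .., hh.update_succ hbb'⟩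

lemma CarriesBelow.exists_succ_chainOne (hg : CarriesBelow m g (chainOne R d) A)
    (hA : IsUnit (squarePad (d (m + 1)) (A m * (g m).val)).det) :
    ∃ g' : ChainGL R d, CarriesBelow (m + 1) g' (chainOne R d) A := by
  obtain ⟨P, b, hb, hPb⟩ := exists_eq_mul_rectOne_mul hA
  obtain ⟨h, rfl, hh⟩ := hb.exists_stabilizer_chainOne
  refine ⟨Function.update (g * h⁻¹) (m + 1) P, (hg.mul hh.inv).update_succ ?_⟩
  simp only [Pi.mul_apply, Pi.inv_apply, Units.val_mul]
  rw [← Matrix.mul_assoc, hPb, Matrix.mul_assoc, Units.mul_inv, Matrix.mul_one]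
  rfl

end Chains

section Density

variable {𝕜 : Type*} [NontriviallyNormedField 𝕜]

lemma dense_eval_ne_zero {f : Polynomial 𝕜} (hf : f ≠ 0) : Dense {t | f.eval t ≠ 0} := by
  have hroots : {t | f.IsRoot t}.Finite := Polynomial.finite_setOfPred_isRoot hf
  simpa [Set.sdiff_eq, Set.compl_ofPred] using dense_univ.sdiff_finite hroots

lemma dense_det_one_sub_smul_ne_zero {ι : Type*} [Fintype ι] [DecidableEq ι]
    (B : Matrix ι ι 𝕜) : Dense {t : 𝕜 | (1 - t • B).det ≠ 0} := by
  have hrev : B.charpolyRev ≠ 0 := fun h => by simpa [h] using B.eval_charpolyRev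
  have heval (t : 𝕜) : B.charpolyRev.eval t = (1 - t • B).det := by
    rw [Matrix.charpolyRev, ← Polynomial.coe_evalRingHom, RingHom.map_det]
    congr 1
    ext r c
    by_cases hrc : r = c <;> simp [hrc, mul_comm t]
  simpa only [heval] using dense_eval_ne_zero hrev

/- On the line through `M` and the rectangular identity, the padded matrix runs affinely from an
arbitrary matrix to `1`, so its determinant is a nonzero polynomial in the parameter. -/
lemma dense_det_squarePad_ne_zero (p q : ℕ) :
    Dense {M : Matrix (Fin p) (Fin q) 𝕜 | (squarePad p M).det ≠ 0} := by
  intro M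
  let line (t : 𝕜) : Matrix (Fin p) (Fin q) 𝕜 := rectOne 𝕜 p q - t • (rectOne 𝕜 p q - M)
  have hline : Continuous line := by fun_prop
  have hpad (t : 𝕜) : squarePad p (line t) = 1 - t • (1 - squarePad p M) := by
    ext r c
    by_cases hc : (c : ℕ) < q <;>
      simp [line, squarePad, rectOne, hc, Matrix.one_apply, Fin.ext_iff]
  have hM : line 1 = M := by simp [line]
  rw [← hM]
  refine map_mem_closure hline (dense_det_one_sub_smul_ne_zero (1 - squarePad p M) 1) ?_
  intro t ht
  simpa only [Set.mem_ofPred_eq, hpad] using ht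

lemma dense_det_squarePad_mul_ne_zero {p q : ℕ} (g : GL (Fin q) 𝕜) :
    Dense {M : Matrix (Fin p) (Fin q) 𝕜 | (squarePad p (M * g.val)).det ≠ 0} := by
  intro M
  have hdense := dense_det_squarePad_ne_zero p q (M * g.val)
  have hcont : Continuous fun N : Matrix (Fin p) (Fin q) 𝕜 => N * g⁻¹.val := by fun_prop
  have hcancel (N : Matrix (Fin p) (Fin q) 𝕜) : N * g⁻¹.val * g.val = N := by
    rw [Matrix.mul_assoc, Units.inv_mul, Matrix.mul_one]
  have hM : M * g.val * g⁻¹.val = M := by rw [Matrix.mul_assoc, Units.mul_inv, Matrix.mul_one]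
  rw [← hM]
  refine map_mem_closure (f := (· * g⁻¹.val)) hcont hdense fun N hN => ?_
  rwa [Set.mem_ofPred_eq, hcancel]

lemma dense_of_dense_update {ι : Type*} [DecidableEq ι] {X : ι → Type*}
    [∀ i, TopologicalSpace (X i)] {s t : Set (∀ i, X i)} (i : ι) (hs : Dense s)
    (hst : ∀ x ∈ s, Dense {y | Function.update x i y ∈ t}) : Dense t := by
  refine (hs.mono fun x hx => ?_).of_closure
  have hupdate : Continuous (Function.update x i) := continuous_const.update i continuous_id
  have hmem := map_mem_closure (t := t) hupdate (hst x hx (x i)) fun y hy => hy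
  rwa [Function.update_eq_self] at hmem

lemma dense_exists_carriesBelow_chainOne (d : ℕ → ℕ) (m : ℕ) :
    Dense {A : ChainRep 𝕜 d | ∃ g, CarriesBelow m g (chainOne 𝕜 d) A} := by
  induction m with
  | zero => simp [CarriesBelow]
  | succ m ih =>
    refine dense_of_dense_update m ih fun A ⟨g, hg⟩ => ?_
    refine (dense_det_squarePad_mul_ne_zero (g m)).mono fun M hM => ?_
    refine (hg.update_right M).exists_succ_chainOne ?_
    rw [Function.update_self]
    exact hM.isUnit

end Density

lemma dense_orbit_repOpen (n : ℕ) (d : ℕ → ℕ) : Dense (orbit n d (repOpen n d)) := by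
  let restrict (A : ChainRep ℂ d) : RepSp n d := fun i => A i
  have hcont : Continuous restrict := continuous_pi fun i => continuous_apply i.val
  have hsurj : Function.Surjective restrict := fun B =>
    ⟨fun i => if hi : i < n then B ⟨i, hi⟩ else 0, by ext i; simp [restrict]⟩
  have hdense := dense_exists_carriesBelow_chainOne (𝕜 := ℂ) d n
  refine (hsurj.denseRange.dense_image hcont hdense).mono ?_
  rintro _ ⟨A, ⟨g, hg⟩, rfl⟩
  refine ⟨fun j => g j, fun i => ?_⟩
  change A i = (g (i + 1)).val * chainOne ℂ d i * (g i)⁻¹.val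
  rw [hg i i.isLt, Matrix.mul_assoc, Units.mul_inv, Matrix.mul_one]

lemma vanishingIdeal_eq_bot_of_dense {n : ℕ} {d : ℕ → ℕ} {S : Set (RepSp n d)} (hS : Dense S) :
    vanishingIdeal n d S = ⊥ := by
  refine eq_bot_iff.mpr fun f hf => ?_
  have hcoords : Continuous (coords n d) :=
    continuous_pi fun q => (continuous_apply q.1).matrix_elem q.2.1 q.2.2
  have hzero : (fun A => MvPolynomial.eval (coords n d A) f) = fun _ => 0 :=
    ((MvPolynomial.continuous_eval f).comp hcoords).ext_on hS continuous_const hf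
  refine Ideal.mem_bot.mpr (MvPolynomial.funext fun x => ?_)
  rw [map_zero]
  exact congrFun hzero fun i r c => x ⟨i, (r, c)⟩

/-- The `GL_d`-orbit of `(S_1,…,S_n)` is Zariski-dense in `Rep_d`:
its vanishing ideal is zero. -/
theorem statement14 (n : ℕ) (hn : 1 ≤ n) (d : ℕ → ℕ) (hd : ∀ i, i ≤ n → 0 < d i) :
    vanishingIdeal n d (orbit n d (repOpen n d)) = ⊥ :=
  vanishingIdeal_eq_bot_of_dense (dense_orbit_repOpen n d)
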